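/- Let m ≥ 2 be a positive integer that is not a power of 2, and let Q_{4m} be the generalized quaternion group of order 4m. Then the diameter of the difference graph D(Q_{4m}) equals 2 if 2m is square-free, and equals 3 otherwise. -/

import Mathlib

/-- Adjacency in the difference of the enhanced power graph and the power graph:
`⟨x, y⟩` is cyclic but neither of `x`, `y` is a power of the other. -/
def diffAdj {G : Type*} [Group G] (x y : G) : Prop :=
  IsCyclic (Subgroup.closure ({x, y} : Set G)) ∧
    (¬ ∃ k : ℤ, y = x ^ k) ∧ (¬ ∃ k : ℤ, x = y ^ k)

/-- The vertex set of the difference graph `𝒟(G)`: the elements of `G` that are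
non-isolated in the difference of the enhanced power graph and the power graph. -/
abbrev DiffVertex (G : Type*) [Group G] := {x : G // ∃ y, diffAdj x y}

/-- The difference graph `𝒟(G)` of a group `G`. -/
def diffGraph (G : Type*) [Group G] : SimpleGraph (DiffVertex G) :=
  SimpleGraph.fromRel (fun a b => diffAdj a.val b.val)

/-- A dominating set of a graph: every vertex is in `S` or adjacent to a vertex of `S`. -/
def IsDominatingSet {V : Type*} (Γ : SimpleGraph V) (S : Set V) : Prop :=
  ∀ v : V, v ∈ S ∨ ∃ u ∈ S, Γ.Adj u v

/-- The domination number of a graph: the least size of a dominating set. -/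
noncomputable def dominationNumber {V : Type*} (Γ : SimpleGraph V) : ℕ :=
  sInf {n : ℕ | ∃ S : Set V, IsDominatingSet Γ S ∧ S.ncard = n}

/-- A maximal cyclic subgroup: a cyclic subgroup not properly contained in
another cyclic subgroup. -/
def IsMaxCyclic {G : Type*} [Group G] (C : Subgroup G) : Prop :=
  IsCyclic C ∧ ∀ D : Subgroup G, IsCyclic D → C ≤ D → C = D

/-!
In a finite cyclic group `C`, one element is a power of another exactly when its order divides the
order of the other. So if all vertices of `𝒟(G)` lie in a cyclic subgroup of order `n`, adjacency
in `𝒟(G)` is incomparability of orders in the divisor lattice of `n`, and the vertices are the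
elements of order other than `1` and `n` as soon as `n` has two distinct prime factors.

Given orders `d ∣ e` with `e ≠ n`, choose a prime power `q ^ k ∣ n` not dividing `e`. It is
incomparable to both `d` and `e` unless `d ∣ q ^ k`, which for square-free `n` is impossible. If
`d ∣ q ^ k`, a prime factor `r ≠ q` of `n` is incomparable to `d`, and either `r` is incomparable
to `e`, or `q ^ k` is incomparable to both `r` and `e`. Conversely, if `p ^ 2 ∣ n`, then `p` and
`n / p` are at distance at least `3`: a divisor of `n` that `p` does not divide divides `n / p`.
The diameter is at least `2` in any case, as an element of odd prime order and its inverse are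
distinct but not adjacent.

In the quaternion group, every element outside `⟨a⟩` generates a maximal cyclic subgroup and is
therefore isolated, so the above applies to `C = ⟨a⟩`.
-/

/-- Incomparability of natural numbers in the divisibility order; it describes adjacency in the
difference graph of a cyclic group in terms of the orders of elements. -/
abbrev DvdIncomp (d e : ℕ) : Prop := IncompRel (· ∣ ·) d e

section Divisors

variable {n d e : ℕ}

theorem dvdIncomp_of_coprime (h : d.Coprime e) (hd : d ≠ 1) (he : e ≠ 1) : DvdIncomp d e :=
  ⟨fun hde => hd (h.eq_one_of_dvd hde), fun hed => he (h.symm.eq_one_of_dvd hed)⟩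

theorem dvdIncomp_of_dvd_prime_pow {q r k : ℕ} (hq : q.Prime) (hr : r.Prime) (hrq : r ≠ q)
    (hd : d ∣ q ^ k) (hd1 : d ≠ 1) : DvdIncomp d r :=
  dvdIncomp_of_coprime
    ((((Nat.coprime_primes hq hr).2 hrq.symm).pow_left k).coprime_dvd_left hd) hd1 hr.ne_one

theorem exists_prime_pow_dvd_not_dvd (h : ¬ n ∣ e) :
    ∃ q k : ℕ, q.Prime ∧ q ^ k ∣ n ∧ ¬ q ^ k ∣ e := by
  rw [Nat.dvd_iff_prime_pow_dvd_dvd] at h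
  push Not at h
  exact h

theorem exists_prime_dvd_ne (hn : n.primeFactors.Nontrivial) (q : ℕ) :
    ∃ r : ℕ, r.Prime ∧ r ∣ n ∧ r ≠ q := by
  obtain ⟨r, hr, hrq⟩ := hn.exists_ne q
  exact ⟨r, Nat.prime_of_mem_primeFactors hr, Nat.dvd_of_mem_primeFactors hr, hrq⟩

theorem nontrivial_primeFactors_mul_of_ne_pow {p m : ℕ} (hp : p.Prime) (hm : m ≠ 0)
    (h : ¬ ∃ k : ℕ, m = p ^ k) : (p * m).primeFactors.Nontrivial := by
  have two_le : 2 ≤ p * m := hp.two_le.trans (Nat.le_mul_of_pos_right p (Nat.pos_of_ne_zero hm))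
  rw [← Nat.not_isPrimePow_iff_nontrivial_of_two_le two_le, isPrimePow_nat_iff]
  rintro ⟨q, k, hq, -, hqk⟩
  have hpq : p = q :=
    (Nat.prime_dvd_prime_iff_eq hp hq).1 (hp.dvd_of_dvd_pow (hqk ▸ dvd_mul_right p m))
  obtain ⟨j, -, hj⟩ := (Nat.dvd_prime_pow hq).1 (hqk ▸ dvd_mul_left m p)
  exact h ⟨j, hpq ▸ hj⟩

theorem exists_dvdIncomp (hn : n.primeFactors.Nontrivial) (hd1 : d ≠ 1) (hd : ¬ n ∣ d) :
    ∃ f, f ∣ n ∧ DvdIncomp d f := by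
  obtain ⟨q, k, hq, hqn, hqd⟩ := exists_prime_pow_dvd_not_dvd hd
  by_cases hdq : d ∣ q ^ k
  · obtain ⟨r, hr, hrn, hrq⟩ := exists_prime_dvd_ne hn q
    exact ⟨r, hrn, dvdIncomp_of_dvd_prime_pow hq hr hrq hdq hd1⟩
  · exact ⟨q ^ k, hqn, hdq, hqd⟩

theorem dvdIncomp_and_dvdIncomp_of_dvd {f : ℕ} (hde : d ∣ e) (hdf : ¬ d ∣ f) (hfe : ¬ f ∣ e) :
    DvdIncomp d f ∧ DvdIncomp f e :=
  ⟨⟨hdf, fun hfd => hfe (hfd.trans hde)⟩, hfe, fun hef => hdf (hde.trans hef)⟩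

theorem exists_dvdIncomp_path_two (hs : Squarefree n) (hd1 : d ≠ 1) (he : ¬ n ∣ e) (hde : d ∣ e) :
    ∃ f, f ∣ n ∧ DvdIncomp d f ∧ DvdIncomp f e := by
  obtain ⟨q, k, hq, hqn, hqe⟩ := exists_prime_pow_dvd_not_dvd he
  have hqkq : q ^ k ∣ q := hs.pow_dvd_of_pow_dvd hqn
  have hdq : ¬ d ∣ q ^ k := fun h => by
    have hd : d = q := ((Nat.dvd_prime hq).1 (h.trans hqkq)).resolve_left hd1
    exact hqe (hqkq.trans (hd ▸ hde))
  exact ⟨q ^ k, hqn, dvdIncomp_and_dvdIncomp_of_dvd hde hdq hqe⟩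

theorem exists_dvdIncomp_path_three (hn : n.primeFactors.Nontrivial) (hd1 : d ≠ 1) (he1 : e ≠ 1)
    (he : ¬ n ∣ e) (hde : d ∣ e) :
    ∃ f g, f ∣ n ∧ g ∣ n ∧ DvdIncomp d f ∧ (f = g ∨ DvdIncomp f g) ∧ DvdIncomp g e := by
  obtain ⟨q, k, hq, hqn, hqe⟩ := exists_prime_pow_dvd_not_dvd he
  by_cases hdq : d ∣ q ^ k
  · obtain ⟨r, hr, hrn, hrq⟩ := exists_prime_dvd_ne hn q
    have hdr : DvdIncomp d r := dvdIncomp_of_dvd_prime_pow hq hr hrq hdq hd1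
    by_cases heq : e ∣ q ^ k
    · exact ⟨r, r, hrn, hrn, hdr, Or.inl rfl,
        (dvdIncomp_of_dvd_prime_pow hq hr hrq heq he1).symm⟩
    · have hqk1 : q ^ k ≠ 1 := fun h => hqe (h ▸ one_dvd e)
      exact ⟨r, q ^ k, hrn, hqn, hdr,
        Or.inr (dvdIncomp_of_dvd_prime_pow hq hr hrq dvd_rfl hqk1).symm, hqe, heq⟩
  · obtain ⟨hd, he⟩ := dvdIncomp_and_dvdIncomp_of_dvd hde hdq hqe
    exact ⟨q ^ k, q ^ k, hqn, hqn, hd, Or.inl rfl, he⟩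

end Divisors

/-- `IsDivisorLabelling Γ n ℓ` says that `Γ` is a blow-up, along `ℓ`, of the incomparability graph
of the divisors of `n` other than `1` and `n`: several vertices may carry the same label, and these
are pairwise non-adjacent. -/
structure IsDivisorLabelling {V : Type*} (Γ : SimpleGraph V) (n : ℕ) (ℓ : V → ℕ) : Prop where
  adj_iff : ∀ u v, Γ.Adj u v ↔ DvdIncomp (ℓ u) (ℓ v)
  mem_range_iff : ∀ d, d ∈ Set.range ℓ ↔ d ∣ n ∧ d ≠ 1 ∧ d ≠ n

namespace IsDivisorLabelling

variable {V : Type*} {Γ : SimpleGraph V} {n : ℕ} {ℓ : V → ℕ}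

theorem dvd (h : IsDivisorLabelling Γ n ℓ) (v : V) : ℓ v ∣ n :=
  ((h.mem_range_iff _).1 ⟨v, rfl⟩).1

theorem ne_one (h : IsDivisorLabelling Γ n ℓ) (v : V) : ℓ v ≠ 1 :=
  ((h.mem_range_iff _).1 ⟨v, rfl⟩).2.1

theorem not_dvd (h : IsDivisorLabelling Γ n ℓ) (v : V) : ¬ n ∣ ℓ v := fun hn =>
  ((h.mem_range_iff _).1 ⟨v, rfl⟩).2.2 (Nat.dvd_antisymm (h.dvd v) hn)

theorem exists_adj_of_dvdIncomp (h : IsDivisorLabelling Γ n ℓ) {u : V} {f : ℕ} (hf : f ∣ n)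
    (huf : DvdIncomp (ℓ u) f) : ∃ w, Γ.Adj u w ∧ ℓ w = f := by
  have hf1 : f ≠ 1 := fun hf1 => huf.2 (hf1 ▸ one_dvd _)
  have hfn : f ≠ n := fun hfn => huf.1 (hfn ▸ h.dvd u)
  obtain ⟨w, rfl⟩ := (h.mem_range_iff f).2 ⟨hf, hf1, hfn⟩
  exact ⟨w, (h.adj_iff u w).2 huf, rfl⟩

theorem ediam_le_of_dvd (h : IsDivisorLabelling Γ n ℓ) {k : ℕ∞} (hk : 1 ≤ k)
    (hdvd : ∀ u v, ℓ u ∣ ℓ v → Γ.edist u v ≤ k) : Γ.ediam ≤ k := by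
  refine SimpleGraph.ediam_le_of_edist_le fun u v => ?_
  by_cases huv : ℓ u ∣ ℓ v
  · exact hdvd u v huv
  by_cases hvu : ℓ v ∣ ℓ u
  · exact SimpleGraph.edist_comm.trans_le (hdvd v u hvu)
  · exact (SimpleGraph.edist_eq_one_iff_adj.2 ((h.adj_iff u v).2 ⟨huv, hvu⟩)).trans_le hk

theorem ediam_le_two (h : IsDivisorLabelling Γ n ℓ) (hs : Squarefree n) : Γ.ediam ≤ 2 := by
  refine h.ediam_le_of_dvd one_le_two fun u v huv => ?_
  obtain ⟨f, hf, huf, hfv⟩ := exists_dvdIncomp_path_two hs (h.ne_one u) (h.not_dvd v) huv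
  obtain ⟨w, huw, rfl⟩ := h.exists_adj_of_dvdIncomp hf huf
  exact SimpleGraph.edist_le (.cons huw (.cons ((h.adj_iff w v).2 hfv) .nil))

theorem ediam_le_three (h : IsDivisorLabelling Γ n ℓ) (hn : n.primeFactors.Nontrivial) :
    Γ.ediam ≤ 3 := by
  refine h.ediam_le_of_dvd (by norm_num) fun u v huv => ?_
  obtain ⟨f, g, hf, hg, huf, hfg, hgv⟩ :=
    exists_dvdIncomp_path_three hn (h.ne_one u) (h.ne_one v) (h.not_dvd v) huv
  obtain ⟨w, huw, rfl⟩ := h.exists_adj_of_dvdIncomp hf huf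
  rcases hfg with rfl | hfg
  · have edist_le : Γ.edist u v ≤ 2 :=
      SimpleGraph.edist_le (.cons huw (.cons ((h.adj_iff w v).2 hgv) .nil))
    exact edist_le.trans (by norm_num)
  · obtain ⟨z, hwz, rfl⟩ := h.exists_adj_of_dvdIncomp hg hfg
    exact SimpleGraph.edist_le (.cons huw (.cons hwz (.cons ((h.adj_iff z v).2 hgv) .nil)))

theorem two_le_ediam (h : IsDivisorLabelling Γ n ℓ) (hℓ : ¬ ℓ.Injective) : 2 ≤ Γ.ediam := by
  obtain ⟨u, v, huv, hne⟩ := Function.not_injective_iff.1 hℓ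
  by_contra! hlt
  have hle : Γ.edist u v ≤ 1 :=
    SimpleGraph.edist_le_ediam.trans (Order.le_of_lt_add_one (by rwa [one_add_one_eq_two]))
  rcases SimpleGraph.edist_le_one_iff_adj_or_eq.1 hle with hadj | heq
  · exact ((h.adj_iff u v).1 hadj).1 huv.dvd
  · exact hne heq

theorem two_lt_edist_of_dvd {p c : ℕ} (h : IsDivisorLabelling Γ (p * c) ℓ) (hp : p.Prime)
    (hpc : p ∣ c) (hne : p ≠ c) {u v : V} (hu : ℓ u = p) (hv : ℓ v = c) : 2 < Γ.edist u v := by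
  rw [SimpleGraph.two_lt_edist_iff, Set.eq_empty_iff_forall_notMem]
  refine ⟨?_, ?_, fun w hw => ?_⟩
  · rintro rfl
    exact hne (hu.symm.trans hv)
  · rw [h.adj_iff, hu, hv]
    exact fun hinc => hinc.1 hpc
  · rw [SimpleGraph.mem_commonNeighbors, h.adj_iff, h.adj_iff, hu, hv] at hw
    have hcop : (ℓ w).Coprime p := (hp.coprime_iff_not_dvd.2 hw.1.1).symm
    exact hw.2.2 (hcop.dvd_of_dvd_mul_left (h.dvd w))

theorem three_le_ediam (h : IsDivisorLabelling Γ n ℓ) (hn : n.primeFactors.Nontrivial)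
    (hs : ¬ Squarefree n) : 3 ≤ Γ.ediam := by
  rw [Nat.squarefree_iff_prime_squarefree] at hs
  push Not at hs
  obtain ⟨p, hp, hpp⟩ := hs
  obtain ⟨c, rfl⟩ := dvd_of_mul_left_dvd hpp
  have hpc : p ∣ c := Nat.dvd_of_mul_dvd_mul_left hp.pos hpp
  have hne : p ≠ c := by
    rintro rfl
    obtain ⟨r, hr, hrn, hrp⟩ := exists_prime_dvd_ne hn p
    exact hrp ((Nat.prime_dvd_prime_iff_eq hr hp).1 (or_self_iff.1 (hr.dvd_mul.1 hrn)))
  have hc0 : c ≠ 0 := by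
    rintro rfl
    simp at hn
  have hc1 : c ≠ 1 := fun hc => hp.not_dvd_one (hc ▸ hpc)
  obtain ⟨u, hu⟩ := (h.mem_range_iff p).2
    ⟨dvd_mul_right p c, hp.ne_one, mt (left_eq_mul₀ hp.ne_zero).1 hc1⟩
  obtain ⟨v, hv⟩ := (h.mem_range_iff c).2
    ⟨dvd_mul_left c p, hc1, mt (right_eq_mul₀ hc0).1 hp.ne_one⟩
  exact (Order.add_one_le_of_lt (h.two_lt_edist_of_dvd hp hpc hne hu hv)).trans
    SimpleGraph.edist_le_ediam

theorem diam_eq (h : IsDivisorLabelling Γ n ℓ) (hn : n.primeFactors.Nontrivial)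
    (hℓ : ¬ ℓ.Injective) : Γ.diam = if Squarefree n then 2 else 3 := by
  split_ifs with hs
  · rw [SimpleGraph.diam, le_antisymm (h.ediam_le_two hs) (h.two_le_ediam hℓ)]
    rfl
  · rw [SimpleGraph.diam, le_antisymm (h.ediam_le_three hn) (h.three_le_ediam hn hs)]
    rfl

end IsDivisorLabelling

section CyclicGroup

variable {C : Type*} [Group C] [IsCyclic C] [Finite C]

theorem mem_zpowers_iff_orderOf_dvd {x y : C} :
    y ∈ Subgroup.zpowers x ↔ orderOf y ∣ orderOf x := by
  classical
  cases nonempty_fintype C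
  refine ⟨orderOf_dvd_of_mem_zpowers, fun h => ?_⟩
  let roots : Finset C := {z | z ^ orderOf x = 1}
  have zpowers_subset : (Subgroup.zpowers x : Set C) ⊆ roots := fun z hz => by
    simpa [roots] using orderOf_dvd_iff_pow_eq_one.1 (orderOf_dvd_of_mem_zpowers hz)
  have card_le : (roots : Set C).ncard ≤ (Subgroup.zpowers x : Set C).ncard := by
    rw [Set.ncard_coe_finset, ← Nat.card_coe_set_eq]
    exact (IsCyclic.card_pow_eq_one_le (orderOf_pos x)).trans_eq (Nat.card_zpowers x).symm
  rw [← SetLike.mem_coe, Set.eq_of_subset_of_ncard_le zpowers_subset card_le]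
  simpa [roots] using orderOf_dvd_iff_pow_eq_one.1 h

theorem exists_orderOf_eq_of_dvd_natCard {d : ℕ} (hd : d ∣ Nat.card C) :
    ∃ x : C, orderOf x = d := by
  obtain ⟨g, hg⟩ := IsCyclic.exists_ofOrder_eq_natCard (α := C)
  exact ⟨g ^ (orderOf g / d), orderOf_pow_orderOf_div (orderOf_pos g).ne' (hg ▸ hd)⟩

end CyclicGroup

section DiffGraph

variable {G : Type*} [Group G]

theorem diffAdj.symm {x y : G} (h : diffAdj x y) : diffAdj y x :=
  ⟨Set.pair_comm x y ▸ h.1, h.2.2, h.2.1⟩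

theorem diffAdj.ne {x y : G} (h : diffAdj x y) : x ≠ y := fun hxy =>
  h.2.1 ⟨1, by rw [zpow_one, hxy]⟩

theorem diffGraph_adj {u v : DiffVertex G} : (diffGraph G).Adj u v ↔ diffAdj u.val v.val := by
  rw [diffGraph, SimpleGraph.fromRel_adj]
  exact ⟨fun h => h.2.elim id diffAdj.symm, fun h => ⟨fun huv => h.ne (congrArg _ huv), Or.inl h⟩⟩

theorem IsMaxCyclic.not_diffAdj {x : G} (h : IsMaxCyclic (Subgroup.zpowers x)) (y : G) :
    ¬ diffAdj x y := by
  rintro ⟨hcyc, hyx, -⟩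
  have hle : Subgroup.zpowers x ≤ Subgroup.closure {x, y} :=
    Subgroup.zpowers_le.2 (Subgroup.subset_closure (by simp))
  have hy : y ∈ Subgroup.zpowers x := by
    rw [h.2 _ hcyc hle]
    exact Subgroup.subset_closure (by simp)
  obtain ⟨k, hk⟩ := Subgroup.mem_zpowers_iff.1 hy
  exact hyx ⟨k, hk.symm⟩

variable {C : Subgroup G} [IsCyclic C] [Finite C]

theorem diffAdj_coe_iff_dvdIncomp_orderOf {x y : C} :
    diffAdj (x : G) y ↔ DvdIncomp (orderOf x) (orderOf y) := by
  have exists_zpow_iff (x y : C) : (∃ k : ℤ, (y : G) = (x : G) ^ k) ↔ orderOf y ∣ orderOf x := by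
    simp only [← mem_zpowers_iff_orderOf_dvd, Subgroup.mem_zpowers_iff, Subtype.ext_iff,
      Subgroup.coe_zpow, eq_comm]
  have closure_le : Subgroup.closure {(x : G), (y : G)} ≤ C :=
    (Subgroup.closure_le C).2 (Set.pair_subset x.2 y.2)
  have closure_isCyclic := Subgroup.isCyclic_of_le closure_le
  rw [diffAdj, exists_zpow_iff, exists_zpow_iff, and_iff_right closure_isCyclic, and_comm]
  rfl

theorem isDivisorLabelling_orderOf (hC : ∀ x y : G, diffAdj x y → x ∈ C)
    (hn : (Nat.card C).primeFactors.Nontrivial) :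
    IsDivisorLabelling (diffGraph G) (Nat.card C) (fun v => orderOf v.val) where
  adj_iff := by
    rintro ⟨x, x', hx⟩ ⟨y, y', hy⟩
    lift x to C using hC x x' hx
    lift y to C using hC y y' hy
    simp only [diffGraph_adj, diffAdj_coe_iff_dvdIncomp_orderOf, Subgroup.orderOf_coe]
  mem_range_iff d := by
    constructor
    · rintro ⟨⟨x, y, hxy⟩, rfl⟩
      lift x to C using hC x y hxy
      lift y to C using hC y x hxy.symm
      rw [diffAdj_coe_iff_dvdIncomp_orderOf] at hxy
      simp only [Subgroup.orderOf_coe]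
      exact ⟨orderOf_dvd_natCard x, fun h => hxy.1 (h ▸ one_dvd _),
        fun h => hxy.2 (h ▸ orderOf_dvd_natCard y)⟩
    · rintro ⟨hd, hd1, hdn⟩
      obtain ⟨f, hf, hdf⟩ := exists_dvdIncomp hn hd1 fun h => hdn (Nat.dvd_antisymm hd h)
      obtain ⟨x, rfl⟩ := exists_orderOf_eq_of_dvd_natCard hd
      obtain ⟨y, rfl⟩ := exists_orderOf_eq_of_dvd_natCard hf
      exact ⟨⟨x, y, diffAdj_coe_iff_dvdIncomp_orderOf.2 hdf⟩, Subgroup.orderOf_coe x⟩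

theorem not_injective_orderOf_diffVertex (hn : (Nat.card C).primeFactors.Nontrivial) :
    ¬ (fun v : DiffVertex G => orderOf v.val).Injective := by
  intro hinj
  obtain ⟨p, hp, hpn, hp2⟩ := exists_prime_dvd_ne hn 2
  obtain ⟨r, hr, hrn, hrp⟩ := exists_prime_dvd_ne hn p
  obtain ⟨x, hx⟩ := exists_orderOf_eq_of_dvd_natCard hpn
  obtain ⟨y, hy⟩ := exists_orderOf_eq_of_dvd_natCard hrn
  have hpr : DvdIncomp p r :=
    dvdIncomp_of_coprime ((Nat.coprime_primes hp hr).2 hrp.symm) hp.ne_one hr.ne_one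
  have hxy : diffAdj (x : G) y := diffAdj_coe_iff_dvdIncomp_orderOf.2 (by rwa [hx, hy])
  have hxy' : diffAdj ((x⁻¹ : C) : G) y :=
    diffAdj_coe_iff_dvdIncomp_orderOf.2 (by rwa [orderOf_inv, hx, hy])
  have hinv : x⁻¹ = x :=
    Subtype.ext (Subtype.mk.inj (@hinj ⟨_, _, hxy'⟩ ⟨_, _, hxy⟩ (by simp)))
  have hx2 : x ^ 2 = 1 := by rw [sq, ← inv_eq_iff_mul_eq_one, hinv]
  exact hp2 ((Nat.prime_dvd_prime_iff_eq hp Nat.prime_two).1 (hx ▸ orderOf_dvd_of_pow_eq_one hx2))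

theorem diam_diffGraph_of_forall_mem (hC : ∀ x y : G, diffAdj x y → x ∈ C)
    (hn : (Nat.card C).primeFactors.Nontrivial) :
    (diffGraph G).diam = if Squarefree (Nat.card C) then 2 else 3 :=
  (isDivisorLabelling_orderOf hC hn).diam_eq hn (not_injective_orderOf_diffVertex hn)

end DiffGraph

section Quaternion

open QuaternionGroup

variable {m : ℕ} [NeZero m]

theorem mem_zpowers_a_one_iff {z : QuaternionGroup m} :
    z ∈ Subgroup.zpowers (a 1) ↔ ∃ i, z = a i := by
  have : NeZero (2 * m) := ⟨mul_ne_zero two_ne_zero (NeZero.ne m)⟩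
  rw [← mem_powers_iff_mem_zpowers, Submonoid.mem_powers_iff]
  simp only [a_one_pow]
  constructor
  · rintro ⟨k, rfl⟩
    exact ⟨k, rfl⟩
  · rintro ⟨i, rfl⟩
    exact ⟨i.val, by rw [ZMod.natCast_zmod_val]⟩

theorem xa_notMem_zpowers_a (i j : ZMod (2 * m)) :
    xa i ∉ Subgroup.zpowers (a j : QuaternionGroup m) := fun h => by
  have hle := Subgroup.zpowers_le.2 (mem_zpowers_a_one_iff.2 ⟨j, rfl⟩)
  obtain ⟨k, hk⟩ := mem_zpowers_a_one_iff.1 (hle h)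
  cases hk

theorem isMaxCyclic_zpowers_xa (i : ZMod (2 * m)) :
    IsMaxCyclic (Subgroup.zpowers (xa i : QuaternionGroup m)) := by
  refine ⟨inferInstance, fun D hD hle => ?_⟩
  obtain ⟨z, rfl⟩ := D.isCyclic_iff_exists_zpowers_eq_top.1 hD
  rcases z with j | j
  · exact absurd (Subgroup.zpowers_le.1 hle) (xa_notMem_zpowers_a i j)
  · refine Subgroup.eq_of_le_of_card_ge hle ?_
    rw [Nat.card_zpowers, Nat.card_zpowers, orderOf_xa, orderOf_xa]

theorem mem_zpowers_a_one_of_diffAdj (x y : QuaternionGroup m) (h : diffAdj x y) :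
    x ∈ Subgroup.zpowers (a 1) := by
  rcases x with i | i
  · exact mem_zpowers_a_one_iff.2 ⟨i, rfl⟩
  · exact absurd h ((isMaxCyclic_zpowers_xa i).not_diffAdj y)

end Quaternion

/-- Corollary 4.4: for `m ≥ 2` not a power of `2`, the diameter of the difference graph
of the generalized quaternion group of order `4m` is `2` if `2m` is square-free and `3`
otherwise. -/
theorem quaternion_diffGraph_diam
    (m : ℕ) (hm : 2 ≤ m) (h2 : ¬ ∃ k : ℕ, m = 2 ^ k) :
    (diffGraph (QuaternionGroup m)).diam = if Squarefree (2 * m) then 2 else 3 := by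
  have : NeZero m := ⟨by omega⟩
  have hcard : Nat.card (Subgroup.zpowers (QuaternionGroup.a 1 : QuaternionGroup m)) = 2 * m := by
    rw [Nat.card_zpowers, QuaternionGroup.orderOf_a_one]
  have hn : (2 * m).primeFactors.Nontrivial :=
    nontrivial_primeFactors_mul_of_ne_pow Nat.prime_two (NeZero.ne m) h2
  rw [← hcard] at hn ⊢
  exact diam_diffGraph_of_forall_mem mem_zpowers_a_one_of_diffAdj hn
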